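/- Let S = ℕ (or any countably infinite set identified with ℕ), let Δ = 𝒫*_f(S) be the simplicial complex of all nonempty finite subsets of S, and for n ≥ 1 let 𝒦ₙ = Δ \ {F : {1,…,n} ⊆ F} be the complex obtained by removing all faces containing {1,…,n}. Then 0 < d(Δ, 𝒦ₙ) ≤ 1/n; in particular d(Δ, 𝒦ₙ) → 0 as n → ∞, so Δ is not an isolated point. -/

import Mathlib

open scoped BigOperators

/-- A simplicial complex over the vertex set `S`: a nonempty collection of
nonempty finite subsets of `S`, closed under taking nonempty subsets. -/
def IsSimplicialComplex {S : Type*} (K : Set (Finset S)) : Prop :=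
  K.Nonempty ∧ (∀ F ∈ K, F.Nonempty) ∧
    ∀ F ∈ K, ∀ G : Finset S, G.Nonempty → G ⊆ F → G ∈ K

/-- Halved ℓ¹ distance between finitely supported real functions:
`d(α,β) = (1/2) ∑ₛ |α s - β s|`. -/
noncomputable def l1dist {S : Type*} (α β : S →₀ ℝ) : ℝ :=
  (1 / 2) * (α - β).sum fun _ x => |x|

/-- The ℓ¹ geometric realization of a collection `K` of finite subsets of `S`:
finitely supported probability vectors whose support is a face of `K`. -/
def realization {S : Type*} (K : Set (Finset S)) : Set (S →₀ ℝ) :=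
  {α | (∀ s, 0 ≤ α s) ∧ (α.sum fun _ x => x) = 1 ∧ α.support ∈ K}

/-- Distance from a point to a set of finitely supported functions. -/
noncomputable def distToSet {S : Type*} (α : S →₀ ℝ) (X : Set (S →₀ ℝ)) : ℝ :=
  sInf (l1dist α '' X)

/-- One-sided Hausdorff distance between (the realizations of) two complexes. -/
noncomputable def hdelta {S : Type*} (K₁ K₂ : Set (Finset S)) : ℝ :=
  sSup ((fun α => distToSet α (realization K₂)) '' realization K₁)

/-- Hausdorff distance between (the realizations of) two simplicial complexes. -/
noncomputable def hdist {S : Type*} (K₁ K₂ : Set (Finset S)) : ℝ :=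
  max (hdelta K₁ K₂) (hdelta K₂ K₁)

/-- `d(F, K)`: supremum of distances to `|K|₁` over probability vectors
supported exactly on `F`. -/
noncomputable def dFace {S : Type*} (F : Finset S) (K : Set (Finset S)) : ℝ :=
  sSup ((fun α => distToSet α (realization K)) ''
    {α : S →₀ ℝ | (∀ s, 0 ≤ α s) ∧ (α.sum fun _ x => x) = 1 ∧ α.support = F})

/-- The `n`-skeleton of a simplicial complex. -/
def skeleton {S : Type*} (n : ℕ) (K : Set (Finset S)) : Set (Finset S) :=
  {F | F ∈ K ∧ F.card ≤ n + 1}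

/-!
Write `Δ` for the full complex and `𝒦` for the complex of faces not containing a finite set `A`.
Since `𝒦 ⊆ Δ`, only the distance from points of `|Δ|₁` to `|𝒦|₁` matters. A probability vector has
mass at most `1 / #A` at some vertex of `A`; pushing that mass to another vertex lands in `|𝒦|₁` and
moves the vector by at most `1 / #A`. Conversely the barycenter of `A` has mass `1 / #A` at each
vertex of `A`, every point of `|𝒦|₁` vanishes at one of them, and two vectors of equal total mass
that differ by `r` at a vertex are at distance at least `r`, because the discrepancy has to be
compensated elsewhere. Hence the distance is exactly `1 / #A`.
-/

open Filter Topology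

section FinsuppSum

variable {S : Type*}

lemma sum_abs_sub_le (α β : S →₀ ℝ) :
    ((α - β).sum fun _ x => |x|) ≤ (α.sum fun _ x => |x|) + β.sum fun _ x => |x| := by
  classical
  rw [Finsupp.sum_of_support_subset _ Finsupp.support_sub _ (by simp),
    Finsupp.sum_of_support_subset α Finset.subset_union_left _ (by simp),
    Finsupp.sum_of_support_subset β Finset.subset_union_right _ (by simp),
    ← Finset.sum_add_distrib]
  exact Finset.sum_le_sum fun s _ => abs_sub (α s) (β s)

lemma two_mul_abs_apply_le_sum_abs {δ : S →₀ ℝ} (hδ : (δ.sum fun _ x => x) = 0) (s : S) :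
    2 * |δ s| ≤ δ.sum fun _ x => |x| := by
  have compensation : δ s = -(δ.erase s).sum fun _ x => x := by
    linarith [Finsupp.add_sum_erase' δ s (fun _ x => x) fun _ => rfl]
  have abs_le_rest : |δ s| ≤ (δ.erase s).sum fun _ x => |x| := by
    rw [compensation, abs_neg]
    exact Finset.abs_sum_le_sum_abs _ _
  linarith [Finsupp.add_sum_erase' δ s (fun _ x => |x|) fun _ => abs_zero]

lemma sum_finset_le_sum {α : S →₀ ℝ} (hα : ∀ s, 0 ≤ α s) (A : Finset S) :
    ∑ s ∈ A, α s ≤ α.sum fun _ x => x := by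
  classical
  rw [Finsupp.sum_of_support_subset α (Finset.subset_union_left (s₂ := A)) _ (by simp)]
  exact Finset.sum_le_sum_of_subset_of_nonneg Finset.subset_union_right fun s _ _ => hα s

lemma exists_mem_apply_le_one_div_card {α : S →₀ ℝ} (hα : ∀ s, 0 ≤ α s)
    (hα_sum : (α.sum fun _ x => x) = 1) {A : Finset S} (hA : A.Nonempty) :
    ∃ i ∈ A, α i ≤ 1 / (A.card : ℝ) := by
  have hcard : (A.card : ℝ) ≠ 0 := by exact_mod_cast hA.card_ne_zero
  refine Finset.exists_le_of_sum_le hA ?_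
  calc ∑ s ∈ A, α s ≤ 1 := hα_sum ▸ sum_finset_le_sum hα A
    _ = ∑ _s ∈ A, 1 / (A.card : ℝ) := by
      rw [Finset.sum_const, nsmul_eq_mul, mul_one_div_cancel hcard]

end FinsuppSum

section Distance

variable {S : Type*} {K L : Set (Finset S)} {α β : S →₀ ℝ}

lemma l1dist_nonneg (α β : S →₀ ℝ) : 0 ≤ l1dist α β :=
  mul_nonneg (by norm_num) (Finset.sum_nonneg fun _ _ => abs_nonneg _)

lemma l1dist_self (α : S →₀ ℝ) : l1dist α α = 0 := by
  simp [l1dist]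

lemma abs_sub_apply_le_l1dist (h : (α.sum fun _ x => x) = β.sum fun _ x => x) (s : S) :
    |α s - β s| ≤ l1dist α β := by
  have hsum : ((α - β).sum fun _ x => x) = 0 := by
    rw [Finsupp.sum_sub_index fun _ _ _ => rfl, h, sub_self]
  have := two_mul_abs_apply_le_sum_abs hsum s
  rw [Finsupp.sub_apply] at this
  rw [l1dist]
  linarith

lemma sum_abs_of_mem_realization (hα : α ∈ realization K) : (α.sum fun _ x => |x|) = 1 :=
  (Finsupp.sum_congr fun s _ => abs_of_nonneg (hα.1 s)).trans hα.2.1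

lemma l1dist_le_one (hα : α ∈ realization K) (hβ : β ∈ realization L) : l1dist α β ≤ 1 := by
  have := sum_abs_sub_le α β
  rw [sum_abs_of_mem_realization hα, sum_abs_of_mem_realization hβ] at this
  rw [l1dist]
  linarith

lemma realization_mono (h : K ⊆ L) : realization K ⊆ realization L :=
  fun _ hα => ⟨hα.1, hα.2.1, h hα.2.2⟩

lemma distToSet_le_l1dist {X : Set (S →₀ ℝ)} (hβ : β ∈ X) : distToSet α X ≤ l1dist α β :=
  csInf_le ⟨0, Set.forall_mem_image.2 fun γ _ => l1dist_nonneg α γ⟩ (Set.mem_image_of_mem _ hβ)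

lemma distToSet_nonneg (α : S →₀ ℝ) (X : Set (S →₀ ℝ)) : 0 ≤ distToSet α X :=
  Real.sInf_nonneg (Set.forall_mem_image.2 fun γ _ => l1dist_nonneg α γ)

lemma hdelta_nonneg (K L : Set (Finset S)) : 0 ≤ hdelta K L :=
  Real.sSup_nonneg (Set.forall_mem_image.2 fun α _ => distToSet_nonneg α _)

lemma hdelta_le {r : ℝ} (hr : 0 ≤ r)
    (h : ∀ α ∈ realization K, ∃ β ∈ realization L, l1dist α β ≤ r) : hdelta K L ≤ r := by
  refine Real.sSup_le (Set.forall_mem_image.2 fun α hα => ?_) hr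
  obtain ⟨β, hβ, hαβ⟩ := h α hα
  exact (distToSet_le_l1dist hβ).trans hαβ

lemma le_hdelta {r : ℝ} (hα : α ∈ realization K) (hL : (realization L).Nonempty)
    (h : ∀ β ∈ realization L, r ≤ l1dist α β) : r ≤ hdelta K L := by
  have bounded : BddAbove ((fun γ => distToSet γ (realization L)) '' realization K) := by
    obtain ⟨β, hβ⟩ := hL
    exact ⟨1, Set.forall_mem_image.2 fun γ hγ =>
      (distToSet_le_l1dist hβ).trans (l1dist_le_one hγ hβ)⟩
  calc r ≤ distToSet α (realization L) := le_csInf (hL.image _) (Set.forall_mem_image.2 h)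
    _ ≤ hdelta K L := le_csSup bounded (Set.mem_image_of_mem _ hα)

lemma hdist_eq_hdelta_of_subset (h : K ⊆ L) : hdist L K = hdelta L K := by
  refine max_eq_left (le_trans ?_ (hdelta_nonneg L K))
  exact hdelta_le le_rfl fun α hα => ⟨α, realization_mono h hα, (l1dist_self α).le⟩

end Distance

section MoveMass

variable {S : Type*}

/-- The function obtained from `α` by transporting its whole mass at `i` to `j`. It is used to
leave the faces containing `i` at a cost of `|α i|`. -/
noncomputable def moveMass (α : S →₀ ℝ) (i j : S) : S →₀ ℝ :=
  α.erase i + Finsupp.single j (α i)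

lemma moveMass_apply_source (α : S →₀ ℝ) {i j : S} (hij : j ≠ i) : moveMass α i j i = 0 := by
  simp [moveMass, hij]

lemma moveMass_nonneg {α : S →₀ ℝ} (hα : ∀ s, 0 ≤ α s) (i j s : S) : 0 ≤ moveMass α i j s := by
  classical
  rw [moveMass, Finsupp.add_apply, Finsupp.erase_apply, Finsupp.single_apply]
  have := hα i
  have := hα s
  positivity

lemma sum_moveMass (α : S →₀ ℝ) (i j : S) :
    ((moveMass α i j).sum fun _ x => x) = α.sum fun _ x => x := by
  rw [moveMass, Finsupp.sum_add_index' (fun _ => rfl) (fun _ _ _ => rfl),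
    Finsupp.sum_single_index rfl, add_comm]
  exact Finsupp.add_sum_erase' α i (fun _ x => x) fun _ => rfl

lemma l1dist_moveMass_le (α : S →₀ ℝ) (i j : S) : l1dist α (moveMass α i j) ≤ |α i| := by
  have difference : α - moveMass α i j = Finsupp.single i (α i) - Finsupp.single j (α i) := by
    rw [moveMass, sub_add_eq_sub_sub]
    nth_rw 1 [← Finsupp.single_add_erase i α]
    rw [add_sub_cancel_right]
  have := sum_abs_sub_le (Finsupp.single i (α i)) (Finsupp.single j (α i))
  rw [Finsupp.sum_single_index abs_zero, Finsupp.sum_single_index abs_zero] at this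
  rw [l1dist, difference]
  linarith

end MoveMass

section Barycenter

variable {S : Type*}

/-- The barycenter of the face `A`: the uniform probability vector on `A`. It is the point of the
realization farthest from the faces that do not contain `A`. -/
noncomputable def barycenter (A : Finset S) : S →₀ ℝ :=
  Finsupp.indicator A fun _ _ => 1 / (A.card : ℝ)

lemma barycenter_apply_of_mem {A : Finset S} {s : S} (hs : s ∈ A) :
    barycenter A s = 1 / (A.card : ℝ) :=
  Finsupp.indicator_of_mem hs _

lemma barycenter_nonneg (A : Finset S) (s : S) : 0 ≤ barycenter A s := by
  classical
  rw [barycenter, Finsupp.indicator_apply]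
  split_ifs <;> positivity

lemma sum_barycenter {A : Finset S} (hA : A.Nonempty) :
    ((barycenter A).sum fun _ x => x) = 1 := by
  have hcard : (A.card : ℝ) ≠ 0 := by exact_mod_cast hA.card_ne_zero
  calc ((barycenter A).sum fun _ x => x) = ∑ s ∈ A, barycenter A s :=
        Finsupp.sum_of_support_subset _ (Finsupp.support_indicator_subset _ _) _ (by simp)
    _ = ∑ _s ∈ A, 1 / (A.card : ℝ) := Finset.sum_congr rfl fun _ => barycenter_apply_of_mem
    _ = 1 := by rw [Finset.sum_const, nsmul_eq_mul, mul_one_div_cancel hcard]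

end Barycenter

section FullComplex

variable {S : Type*} {A : Finset S}

/-- The complex `Δ` of all nonempty finite subsets of `S`. -/
abbrev fullComplex (S : Type*) : Set (Finset S) :=
  {F | F.Nonempty}

/-- The complex `Δ \ {F : A ⊆ F}` of the faces that do not contain `A`; it is the paper's `𝒦ₙ`
when `A = {1, …, n}`. -/
abbrev facesNotContaining (A : Finset S) : Set (Finset S) :=
  {F | F.Nonempty ∧ ¬ A ⊆ F}

lemma support_nonempty_of_sum_eq_one {α : S →₀ ℝ} (h : (α.sum fun _ x => x) = 1) :
    α.support.Nonempty := by
  rw [Finsupp.support_nonempty_iff]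
  rintro rfl
  simp at h

lemma mem_realization_facesNotContaining_iff {α : S →₀ ℝ} :
    α ∈ realization (facesNotContaining A) ↔
      α ∈ realization (fullComplex S) ∧ ∃ i ∈ A, α i = 0 := by
  simp only [realization, Set.mem_ofPred_eq, Finset.not_subset, Finsupp.notMem_support_iff,
    and_assoc]

lemma moveMass_mem_realization {α : S →₀ ℝ} (hα : α ∈ realization (fullComplex S)) (i j : S) :
    moveMass α i j ∈ realization (fullComplex S) :=
  have hsum := (sum_moveMass α i j).trans hα.2.1
  ⟨moveMass_nonneg hα.1 i j, hsum, support_nonempty_of_sum_eq_one hsum⟩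

lemma barycenter_mem_realization (hA : A.Nonempty) :
    barycenter A ∈ realization (fullComplex S) :=
  ⟨barycenter_nonneg A, sum_barycenter hA, support_nonempty_of_sum_eq_one (sum_barycenter hA)⟩

lemma exists_mem_realization_facesNotContaining_l1dist_le [Nontrivial S] (hA : A.Nonempty)
    {α : S →₀ ℝ} (hα : α ∈ realization (fullComplex S)) :
    ∃ β ∈ realization (facesNotContaining A), l1dist α β ≤ 1 / (A.card : ℝ) := by
  obtain ⟨i, hiA, hi⟩ := exists_mem_apply_le_one_div_card hα.1 hα.2.1 hA
  obtain ⟨j, hji⟩ := exists_ne i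
  refine ⟨moveMass α i j, mem_realization_facesNotContaining_iff.2
    ⟨moveMass_mem_realization hα i j, i, hiA, moveMass_apply_source α hji⟩, ?_⟩
  calc l1dist α (moveMass α i j) ≤ |α i| := l1dist_moveMass_le α i j
    _ = α i := abs_of_nonneg (hα.1 i)
    _ ≤ 1 / (A.card : ℝ) := hi

lemma one_div_card_le_l1dist_barycenter {β : S →₀ ℝ}
    (hβ : β ∈ realization (facesNotContaining A)) :
    1 / (A.card : ℝ) ≤ l1dist (barycenter A) β := by
  obtain ⟨i, hiA, hi⟩ := (mem_realization_facesNotContaining_iff.1 hβ).2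
  calc 1 / (A.card : ℝ) = barycenter A i - β i := by
        rw [barycenter_apply_of_mem hiA, hi, sub_zero]
    _ ≤ |barycenter A i - β i| := le_abs_self _
    _ ≤ l1dist (barycenter A) β :=
        abs_sub_apply_le_l1dist ((sum_barycenter ⟨i, hiA⟩).trans hβ.2.1.symm) i

theorem hdist_fullComplex_facesNotContaining [Nontrivial S] (hA : A.Nonempty) :
    hdist (fullComplex S) (facesNotContaining A) = 1 / (A.card : ℝ) := by
  rw [hdist_eq_hdelta_of_subset fun _ hF => hF.1]
  have hbary := barycenter_mem_realization hA
  obtain ⟨β, hβ, _⟩ := exists_mem_realization_facesNotContaining_l1dist_le hA hbary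
  apply le_antisymm
  · exact hdelta_le (by positivity)
      fun α hα => exists_mem_realization_facesNotContaining_l1dist_le hA hα
  · exact le_hdelta hbary ⟨β, hβ⟩ fun γ hγ => one_div_card_le_l1dist_barycenter hγ

end FullComplex

theorem stmt15_general {S : Type*} [Nontrivial S] :
    (∀ A : Finset S, A.Nonempty →
      hdist (fullComplex S) (facesNotContaining A) = 1 / (A.card : ℝ)) ∧
    Tendsto (fun A : Finset S => hdist (fullComplex S) (facesNotContaining A))
      (comap Finset.card atTop) (𝓝 0) := by
  refine ⟨fun A hA => hdist_fullComplex_facesNotContaining hA, ?_⟩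
  refine (tendsto_one_div_atTop_nhds_zero_nat.comp tendsto_comap).congr' ?_
  filter_upwards [tendsto_comap.eventually_ge_atTop 1] with A hA
  exact (hdist_fullComplex_facesNotContaining (Finset.card_pos.1 hA)).symm

/-- With `Δ` the complex of all nonempty finite subsets of `ℕ` and
`𝒦ₙ = Δ \ {F : {1,…,n} ⊆ F}`, one has `0 < d(Δ,𝒦ₙ) ≤ 1/n` for all `n ≥ 1`,
and hence `d(Δ,𝒦ₙ) → 0`: `Δ` is not an isolated point. -/
theorem stmt15 :
    (∀ n : ℕ, 1 ≤ n →
      0 < hdist {F : Finset ℕ | F.Nonempty}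
            {F : Finset ℕ | F.Nonempty ∧ ¬ Finset.Icc 1 n ⊆ F} ∧
      hdist {F : Finset ℕ | F.Nonempty}
          {F : Finset ℕ | F.Nonempty ∧ ¬ Finset.Icc 1 n ⊆ F} ≤ 1 / (n : ℝ)) ∧
    Filter.Tendsto
      (fun n : ℕ => hdist {F : Finset ℕ | F.Nonempty}
        {F : Finset ℕ | F.Nonempty ∧ ¬ Finset.Icc 1 n ⊆ F})
      Filter.atTop (nhds 0) := by
  have tendsto_card : Tendsto (Finset.Icc 1) atTop (comap Finset.card atTop) :=
    tendsto_comap_iff.2 (tendsto_id.congr fun n => by simp)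
  exact ⟨fun n hn => by simp [stmt15_general.1 _ (Finset.nonempty_Icc.2 hn), Nat.lt_of_succ_le hn],
    stmt15_general.2.comp tendsto_card⟩
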